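/- arXiv:nlin/0406059 — 3 statements merged into one kernel-verified Lean document; each statement's English description precedes it below -/
import Mathlib

section
/- Let 1 ≤ N ≤ M−1. For each i with 1 ≤ i ≤ N: (a) for every ξ ∈ ℝ the limit W_i(ξ) := lim_{n→−∞, n∈ℤ} w_n( c_{i,M−N+i}·n + ξ ) exists; (b) lim_{ξ→+∞} W_i(ξ) = Σ_{j=1}^{i−1} p_j + Σ_{j=1}^{N−i+1} p_{M−j+1} and lim_{ξ→−∞} W_i(ξ) = Σ_{j=1}^{i} p_j + Σ_{j=1}^{N−i} p_{M−j+1}. -/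
open scoped Classical

/-!
Grouping `τ` by `N`-element index sets, `w = ∂ₓ log τ` is the mean of `P S = ∑ j ∈ S, p j` for the
weights given by the terms of `τ`. On the line `x = c n + ξ` the exponent of the term `S` is
`n * ∑ j ∈ S, (log (p j) + c * p j)` plus a term independent of `n`, so as `n → -∞` only the sets
minimising this sum survive.

Put `k = M - N + i`. The constant `c` is chosen so that the strictly concave function
`u ↦ log u + c u` takes the same value `μ` at `p i` and `p k`; it is below `μ` outside `[p i, p k]`
and above `μ` strictly inside. The `N - 1` indices outside `[i, k]` therefore belong to every
minimiser and the remaining index is either `i` or `k`. In the mean over the two surviving sets,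
`ξ → ∞` selects the one with the larger `P` and `ξ → -∞` the other.
-/

section GibbsMean

open Finset Filter Topology Real

variable {α ι : Type*} {s T : Finset α} {C P : α → ℝ}

/-- The mean of `P` over `s` for the weights `C a * exp (E a)`, normalised to total mass one. It is
the logarithmic derivative of a sum of exponentials (`deriv_log_sum_mul_exp`). -/
noncomputable def gibbsMean (s : Finset α) (C E P : α → ℝ) : ℝ :=
  (∑ a ∈ s, P a * C a * exp (E a)) / ∑ a ∈ s, C a * exp (E a)

lemma gibbsMean_singleton {a : α} (hC : C a ≠ 0) (E P : α → ℝ) : gibbsMean {a} C E P = P a := by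
  simp only [gibbsMean, sum_singleton, mul_assoc]
  exact mul_div_cancel_right₀ _ (mul_ne_zero hC (exp_ne_zero _))

lemma gibbsMean_sub_const (s : Finset α) (C E P : α → ℝ) (m : ℝ) :
    gibbsMean s C (fun a => E a - m) P = gibbsMean s C E P := by
  simp only [gibbsMean, exp_sub, ← mul_div_assoc, ← sum_div]
  exact div_div_div_cancel_right₀ (exp_ne_zero m) _ _

lemma deriv_log_sum_mul_exp {E : α → ℝ → ℝ} {x : ℝ} (hs : s.Nonempty) (hC : ∀ a ∈ s, 0 < C a)
    (hE : ∀ a ∈ s, HasDerivAt (E a) (P a) x) :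
    deriv (fun y => log (∑ a ∈ s, C a * exp (E a y))) x = gibbsMean s C (fun a => E a x) P := by
  have hpos : 0 < ∑ a ∈ s, C a * exp (E a x) :=
    sum_pos (fun a ha => mul_pos (hC a ha) (exp_pos _)) hs
  have hsum : HasDerivAt (fun y => ∑ a ∈ s, C a * exp (E a y))
      (∑ a ∈ s, P a * C a * exp (E a x)) x :=
    HasDerivAt.fun_sum fun a ha => ((hE a ha).exp.const_mul (C a)).congr_deriv (by ring)
  exact (hsum.log hpos.ne').deriv

lemma tendsto_sum_mul_exp_of_dominant {l : Filter ι} {E : ι → α → ℝ} {K : α → ℝ} (hTs : T ⊆ s)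
    (hT : ∀ a ∈ T, Tendsto (E · a) l (𝓝 (K a)))
    (hs : ∀ a ∈ s, a ∉ T → Tendsto (E · a) l atBot) (Q : α → ℝ) :
    Tendsto (fun n => ∑ a ∈ s, Q a * exp (E n a)) l (𝓝 (∑ a ∈ T, Q a * exp (K a))) := by
  have hdominant : Tendsto (fun n => ∑ a ∈ T, Q a * exp (E n a)) l
      (𝓝 (∑ a ∈ T, Q a * exp (K a))) :=
    tendsto_finsetSum _ fun a ha => (hT a ha).rexp.const_mul (Q a)
  have hrest : Tendsto (fun n => ∑ a ∈ s \ T, Q a * exp (E n a)) l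
      (𝓝 (∑ a ∈ s \ T, Q a * 0)) :=
    tendsto_finsetSum _ fun a ha =>
      (tendsto_exp_atBot.comp (hs a (mem_sdiff.1 ha).1 (mem_sdiff.1 ha).2)).const_mul (Q a)
  simpa only [sum_sdiff hTs, mul_zero, sum_const_zero, zero_add] using hrest.add hdominant

lemma tendsto_gibbsMean_of_dominant {l : Filter ι} {E : ι → α → ℝ} {K : α → ℝ} (m : ι → ℝ)
    (hTs : T ⊆ s) (hne : T.Nonempty) (hC : ∀ a ∈ T, 0 < C a)
    (hT : ∀ a ∈ T, Tendsto (fun n => E n a - m n) l (𝓝 (K a)))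
    (hs : ∀ a ∈ s, a ∉ T → Tendsto (fun n => E n a - m n) l atBot) (P : α → ℝ) :
    Tendsto (fun n => gibbsMean s C (E n) P) l (𝓝 (gibbsMean T C K P)) := by
  have hpos : 0 < ∑ a ∈ T, C a * exp (K a) :=
    sum_pos (fun a ha => mul_pos (hC a ha) (exp_pos _)) hne
  have hlim := (tendsto_sum_mul_exp_of_dominant hTs hT hs fun a => P a * C a).div
    (tendsto_sum_mul_exp_of_dominant hTs hT hs C) hpos.ne'
  exact hlim.congr fun n => gibbsMean_sub_const s C (E n) P (m n)

lemma tendsto_gibbsMean_atBot_of_argmin {H : α → ℝ} {μ : ℝ} (hTs : T ⊆ s) (hne : T.Nonempty)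
    (hC : ∀ a ∈ T, 0 < C a) (hT : ∀ a ∈ T, H a = μ) (hs : ∀ a ∈ s, a ∉ T → μ < H a)
    (K P : α → ℝ) :
    Tendsto (fun r : ℝ => gibbsMean s C (fun a => r * H a + K a) P) atBot
      (𝓝 (gibbsMean T C K P)) := by
  refine tendsto_gibbsMean_of_dominant (fun r => r * μ) hTs hne hC (fun a ha => ?_)
    (fun a ha haT => ?_) P
  · refine tendsto_const_nhds.congr fun r => ?_
    rw [hT a ha, add_sub_cancel_left]
  · have hdecay : Tendsto (fun r : ℝ => r * (H a - μ) + K a) atBot atBot :=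
      tendsto_atBot_add_const_right _ _
        (tendsto_id.atBot_mul_const (sub_pos.2 (hs a ha haT)))
    exact hdecay.congr fun r => by ring

lemma tendsto_gibbsMean_atTop_of_argmax {H : α → ℝ} {μ : ℝ} (hTs : T ⊆ s) (hne : T.Nonempty)
    (hC : ∀ a ∈ T, 0 < C a) (hT : ∀ a ∈ T, H a = μ) (hs : ∀ a ∈ s, a ∉ T → H a < μ)
    (K P : α → ℝ) :
    Tendsto (fun r : ℝ => gibbsMean s C (fun a => r * H a + K a) P) atTop
      (𝓝 (gibbsMean T C K P)) := by
  have hneg := (tendsto_gibbsMean_atBot_of_argmin hTs hne hC (H := fun a => -H a) (μ := -μ)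
    (fun a ha => congrArg Neg.neg (hT a ha)) (fun a ha haT => neg_lt_neg (hs a ha haT)) K P).comp
    tendsto_neg_atTop_atBot
  simpa only [Function.comp_def, neg_mul_neg] using hneg

end GibbsMean

section StrictConcave

variable {𝕜 : Type*} [Field 𝕜] [LinearOrder 𝕜] [IsStrictOrderedRing 𝕜] {s : Set 𝕜} {f : 𝕜 → 𝕜}
  {a b x : 𝕜}

lemma strictConcaveOn_min_lt_of_mem_Ioo (hf : StrictConcaveOn 𝕜 s f) (ha : a ∈ s) (hb : b ∈ s)
    (hx : x ∈ Set.Ioo a b) : min (f a) (f b) < f x := by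
  have hab : a < b := hx.1.trans hx.2
  exact hf.lt_on_openSegment ha hb hab.ne (by rwa [openSegment_eq_Ioo hab])

lemma strictConcaveOn_lt_of_mem_Ioo (hf : StrictConcaveOn 𝕜 s f) (ha : a ∈ s) (hb : b ∈ s)
    (hfab : f a = f b) (hx : x ∈ Set.Ioo a b) : f a < f x := by
  simpa only [← hfab, min_self] using strictConcaveOn_min_lt_of_mem_Ioo hf ha hb hx

lemma strictConcaveOn_lt_of_notMem_Icc (hf : StrictConcaveOn 𝕜 s f) (ha : a ∈ s) (hb : b ∈ s)
    (hxs : x ∈ s) (hab : a < b) (hfab : f a = f b) (hx : x ∉ Set.Icc a b) : f x < f a := by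
  rcases lt_or_ge x a with hxa | hax
  · have hmin := strictConcaveOn_min_lt_of_mem_Ioo hf hxs hb ⟨hxa, hab⟩
    rw [← hfab] at hmin
    exact (min_lt_iff.1 hmin).resolve_right (lt_irrefl _)
  · have hbx : b < x := lt_of_not_ge fun hxb => hx ⟨hax, hxb⟩
    have hmin := strictConcaveOn_min_lt_of_mem_Ioo hf ha hxs ⟨hab, hbx⟩
    rw [← hfab] at hmin
    exact (min_lt_iff.1 hmin).resolve_left (lt_irrefl _)

lemma strictConcaveOn_log_add_mul (c : ℝ) :
    StrictConcaveOn ℝ (Set.Ioi 0) fun u : ℝ => Real.log u + c * u :=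
  strictConcaveOn_log_Ioi.add_concaveOn ((LinearMap.mulLeft ℝ c).concaveOn (convex_Ioi 0))

end StrictConcave

section MinimalSums

open Finset

variable {α β : Type*} [DecidableEq α] [AddCommMonoid β] [PartialOrder β]
  [IsOrderedCancelAddMonoid β]

lemma sum_lt_sum_of_card_eq_of_threshold {S T : Finset α} {h : α → β} {μ : β}
    (hcard : #S = #T) (hT : ∀ x ∈ T, h x ≤ μ) (hS : ∀ x ∉ T, μ ≤ h x)
    (hlt : ∃ x ∈ T \ S, h x < μ) : ∑ x ∈ T, h x < ∑ x ∈ S, h x := by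
  rw [← sum_sdiff_lt_sum_sdiff]
  calc ∑ x ∈ T \ S, h x < ∑ _x ∈ T \ S, μ :=
        sum_lt_sum (fun x hx => hT x (mem_sdiff.1 hx).1) hlt
    _ = ∑ _x ∈ S \ T, μ := by rw [sum_const, sum_const, card_sdiff_comm hcard]
    _ ≤ ∑ x ∈ S \ T, h x := sum_le_sum fun x hx => hS x (mem_sdiff.1 hx).2

lemma sum_insert_lt_sum_of_card_eq {L S : Finset α} {h : α → β} {a : α} (ha : a ∉ L)
    (hL : ∀ x ∈ L, h x < h a) (hLc : ∀ x ∉ L, h a ≤ h x) (hcard : #S = #L + 1)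
    (hS : ∀ x ∉ L, h x = h a → S ≠ insert x L) :
    ∑ x ∈ insert a L, h x < ∑ x ∈ S, h x := by
  by_cases hLS : L ⊆ S
  · obtain ⟨x, hx, rfl⟩ := exists_eq_insert_iff.2 ⟨hLS, hcard.symm⟩
    rw [sum_insert ha, sum_insert hx]
    exact add_lt_add_left (lt_of_le_of_ne (hLc x hx) fun hax => hS x hx hax.symm rfl) _
  · obtain ⟨x, hxL, hxS⟩ := not_subset.1 hLS
    have hcard_insert : #S = #(insert a L) := hcard.trans (card_insert_of_notMem ha).symm
    have hle : ∀ y ∈ insert a L, h y ≤ h a :=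
      (forall_mem_insert ..).2 ⟨le_rfl, fun y hy => (hL y hy).le⟩
    have hge : ∀ y ∉ insert a L, h a ≤ h y := fun y hy => hLc y (notMem_mono (subset_insert a L) hy)
    exact sum_lt_sum_of_card_eq_of_threshold hcard_insert hle hge
      ⟨x, mem_sdiff.2 ⟨mem_insert_of_mem hxL, hxS⟩, hL x hxL⟩

end MinimalSums

section ComplementOfInterval

open Finset

variable {α : Type*} [Fintype α] [LinearOrder α] [LocallyFiniteOrder α]

lemma insert_left_compl_Icc (i k : α) : insert i (Icc i k)ᶜ = (Ioc i k)ᶜ := by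
  rw [← compl_erase, Icc_erase_left]

lemma insert_right_compl_Icc (i k : α) : insert k (Icc i k)ᶜ = (Ico i k)ᶜ := by
  rw [← compl_erase, Icc_erase_right]

variable {i k : α}

lemma sum_compl_Ioc_eq_add {β : Type*} [AddCommMonoid β] (hik : i ≤ k) (h : α → β) :
    ∑ j ∈ (Ioc i k)ᶜ, h j = h i + ∑ j ∈ (Icc i k)ᶜ, h j := by
  rw [← insert_left_compl_Icc, sum_insert (by simpa using hik)]

lemma sum_compl_Ico_eq_add {β : Type*} [AddCommMonoid β] (hik : i ≤ k) (h : α → β) :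
    ∑ j ∈ (Ico i k)ᶜ, h j = h k + ∑ j ∈ (Icc i k)ᶜ, h j := by
  rw [← insert_right_compl_Icc, sum_insert (by simpa using hik)]

lemma sum_compl_Ioc_lt_sum_compl_Ico {β : Type*} [AddCommMonoid β] [PartialOrder β]
    [IsOrderedCancelAddMonoid β] (hik : i ≤ k) {h : α → β} (hlt : h i < h k) :
    ∑ j ∈ (Ioc i k)ᶜ, h j < ∑ j ∈ (Ico i k)ᶜ, h j := by
  simpa only [sum_compl_Ioc_eq_add hik, sum_compl_Ico_eq_add hik, add_lt_add_iff_right] using hlt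

lemma card_compl_Ioc (hik : i ≤ k) : #(Ioc i k)ᶜ = #(Icc i k)ᶜ + 1 := by
  rw [← insert_left_compl_Icc, card_insert_of_notMem (by simpa using hik)]

lemma card_compl_Ico (hik : i ≤ k) : #(Ico i k)ᶜ = #(Icc i k)ᶜ + 1 := by
  rw [← insert_right_compl_Icc, card_insert_of_notMem (by simpa using hik)]

lemma sum_compl_Ioc_lt_sum_of_strictConcaveOn {𝕜 : Type*} [Field 𝕜] [LinearOrder 𝕜]
    [IsStrictOrderedRing 𝕜] {s : Set 𝕜} {f : 𝕜 → 𝕜} {p : α → 𝕜}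
    (hf : StrictConcaveOn 𝕜 s f) (hp : StrictMono p) (hps : ∀ j, p j ∈ s) (hik : i < k)
    (hfik : f (p i) = f (p k)) {S : Finset α} (hcard : #S = #(Icc i k)ᶜ + 1)
    (hSi : S ≠ (Ioc i k)ᶜ) (hSk : S ≠ (Ico i k)ᶜ) :
    ∑ j ∈ (Ioc i k)ᶜ, f (p j) < ∑ j ∈ S, f (p j) := by
  have hbelow : ∀ j ∈ (Icc i k)ᶜ, f (p j) < f (p i) := fun j hj =>
    strictConcaveOn_lt_of_notMem_Icc hf (hps i) (hps k) (hps j) (hp hik) hfik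
      (by simpa [hp.le_iff_le] using hj)
  have habove : ∀ j ∉ (Icc i k)ᶜ, j ≠ i → j ≠ k → f (p i) < f (p j) := fun j hj hji hjk => by
    have hjIcc : i ≤ j ∧ j ≤ k := by simpa using hj
    exact strictConcaveOn_lt_of_mem_Ioo hf (hps i) (hps k) hfik
      ⟨hp (hjIcc.1.lt_of_ne hji.symm), hp (hjIcc.2.lt_of_ne hjk)⟩
  rw [← insert_left_compl_Icc] at hSi ⊢
  rw [← insert_right_compl_Icc] at hSk
  refine sum_insert_lt_sum_of_card_eq (by simpa using hik.le) hbelow (fun j hj => ?_) hcard ?_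
  · rcases eq_or_ne j i with rfl | hji
    · exact le_rfl
    rcases eq_or_ne j k with rfl | hjk
    · exact hfik.le
    exact (habove j hj hji hjk).le
  · rintro j hj hfj rfl
    exact (habove j hj (fun hji => hSi (hji ▸ rfl)) fun hjk => hSk (hjk ▸ rfl)).ne' hfj

lemma filter_lt_or_le_eq_compl_Ico (i k : α) :
    univ.filter (fun j => j < i ∨ k ≤ j) = (Ico i k)ᶜ := by
  ext j
  simp [imp_iff_not_or]

lemma filter_le_or_lt_eq_compl_Ioc (i k : α) :
    univ.filter (fun j => j ≤ i ∨ k < j) = (Ioc i k)ᶜ := by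
  ext j
  simp [imp_iff_not_or]

end ComplementOfInterval

section TauFunction

open Finset Filter Topology Real

variable {α : Type*}

/-- The phase `n log p_j + p_j x + κ_j` of the `j`-th exponential. The offset `κ_j` collects
everything independent of `n` and `x`, that is `-t / p_j + θ_0^{(j)}`; the lattice variable `n` is
allowed to be real. -/
noncomputable def solitonPhase (p κ : α → ℝ) (j : α) (n x : ℝ) : ℝ :=
  n * log (p j) + p j * x + κ j

lemma hasDerivAt_solitonPhase (p κ : α → ℝ) (j : α) (n x : ℝ) :
    HasDerivAt (solitonPhase p κ j n) (p j) x :=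
  ((hasDerivAt_const_mul (p j)).const_add (n * log (p j))).add_const (κ j)

lemma sum_solitonPhase_on_line (p κ : α → ℝ) (c n ξ : ℝ) (S : Finset α) :
    ∑ j ∈ S, solitonPhase p κ j n (c * n + ξ) =
      n * ∑ j ∈ S, (log (p j) + c * p j) + (ξ * ∑ j ∈ S, p j + ∑ j ∈ S, κ j) := by
  rw [mul_sum, mul_sum, ← sum_add_distrib, ← sum_add_distrib]
  exact sum_congr rfl fun j _ => by rw [solitonPhase]; ring

/-- The coefficient `Δ(S) = ∏ (p_a - p_b)²` over the pairs `a < b` in `S`, the square of the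
Vandermonde determinant of the values of `p` on `S`. -/
def sqVandermonde [LinearOrder α] (p : α → ℝ) (S : Finset α) : ℝ :=
  ∏ a ∈ S, ∏ b ∈ S, if a < b then (p a - p b) ^ 2 else 1

lemma sqVandermonde_pos [LinearOrder α] {p : α → ℝ} (hp : Function.Injective p) (S : Finset α) :
    0 < sqVandermonde p S := by
  refine prod_pos fun a _ => prod_pos fun b _ => ?_
  split_ifs with hab
  · exact sq_pos_of_ne_zero (sub_ne_zero.2 (hp.ne hab.ne))
  · exact one_pos

variable [Fintype α]

/-- The `τ`-function `τ_n^{(N)}(x)`, as a sum over the `N`-element sets of indices, with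
arbitrary coefficients `C S` in place of `Δ(S)`. -/
noncomputable def tauFunction (C : Finset α → ℝ) (p κ : α → ℝ) (N : ℕ) (n x : ℝ) : ℝ :=
  ∑ S ∈ powersetCard N univ, C S * exp (∑ j ∈ S, solitonPhase p κ j n x)

lemma deriv_log_tauFunction {C : Finset α → ℝ} {N : ℕ} (hN : N ≤ Fintype.card α)
    (hC : ∀ S, #S = N → 0 < C S) (p κ : α → ℝ) (n x : ℝ) :
    deriv (fun y => log (tauFunction C p κ N n y)) x =
      gibbsMean (powersetCard N univ) C (fun S => ∑ j ∈ S, solitonPhase p κ j n x)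
        fun S => ∑ j ∈ S, p j := by
  refine deriv_log_sum_mul_exp (powersetCard_nonempty.2 hN)
    (fun S hS => hC S (mem_powersetCard_univ.1 hS)) fun S _ => ?_
  exact HasDerivAt.fun_sum fun j _ => hasDerivAt_solitonPhase p κ j n x

variable [LinearOrder α]

lemma sum_strictMono_eq_sum_powersetCard {β : Type*} [AddCommMonoid β] {N : ℕ}
    [DecidablePred (StrictMono : (Fin N → α) → Prop)] (F : Finset α → β) :
    ∑ f : Fin N → α, (if StrictMono f then F (univ.image f) else 0) =
      ∑ S ∈ powersetCard N univ, F S := by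
  rw [← sum_filter]
  refine sum_nbij (fun f => univ.image f) (fun f hf => ?_) (fun f hf g hg hfg => ?_)
    (fun S hS => ?_) fun f _ => rfl
  · rw [mem_powersetCard_univ, card_image_of_injective _ (mem_filter.1 hf).2.injective, card_fin]
  · refine (StrictMono.range_inj (mem_filter.1 hf).2 (mem_filter.1 hg).2).1 ?_
    simpa only [coe_image, coe_univ, Set.image_univ] using congrArg SetLike.coe hfg
  · have hcard : #S = N := mem_powersetCard_univ.1 hS
    exact ⟨S.orderEmbOfFin hcard, by simpa using (S.orderEmbOfFin hcard).strictMono, by simp⟩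

lemma sum_strictMono_eq_tauFunction (p κ : α → ℝ) (N : ℕ) (n x : ℝ)
    [DecidablePred (StrictMono : (Fin N → α) → Prop)] :
    (∑ f : Fin N → α,
      if StrictMono f then
        (∏ a : Fin N, ∏ b : Fin N, if a < b then (p (f a) - p (f b)) ^ 2 else 1) *
          exp (∑ j, solitonPhase p κ (f j) n x)
      else 0) = tauFunction (sqVandermonde p) p κ N n x := by
  rw [tauFunction, ← sum_strictMono_eq_sum_powersetCard]
  refine sum_congr rfl fun f _ => if_ctx_congr Iff.rfl (fun hf => ?_) fun _ => rfl
  simp only [sqVandermonde, prod_image hf.injective.injOn, sum_image hf.injective.injOn,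
    hf.lt_iff_lt]

variable [LocallyFiniteOrder α] {C : Finset α → ℝ} {p : α → ℝ} {i k : α} {N : ℕ}

/-- The limit `W(ξ)` of `∂ₓ log τ_n` along `x = c n + ξ` as `n → -∞`: the mean of
`∑ j ∈ S, p j` over the two index sets that dominate there. -/
noncomputable def solitonProfile (C : Finset α → ℝ) (p κ : α → ℝ) (i k : α) (ξ : ℝ) : ℝ :=
  gibbsMean {(Ioc i k)ᶜ, (Ico i k)ᶜ} C (fun S => ξ * ∑ j ∈ S, p j + ∑ j ∈ S, κ j)
    fun S => ∑ j ∈ S, p j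

theorem tendsto_deriv_log_tauFunction_atBot (hp : ∀ j, 0 < p j) (hpmono : StrictMono p)
    (hik : i < k) (hN : #(Icc i k)ᶜ + 1 = N) (hC : ∀ S, #S = N → 0 < C S) {c : ℝ}
    (hc : log (p i) + c * p i = log (p k) + c * p k) (κ : α → ℝ) (ξ : ℝ) :
    Tendsto (fun n : ℝ => deriv (fun y => log (tauFunction C p κ N n y)) (c * n + ξ)) atBot
      (𝓝 (solitonProfile C p κ i k ξ)) := by
  have hcard : ∀ S ∈ ({(Ioc i k)ᶜ, (Ico i k)ᶜ} : Finset (Finset α)), #S = N := by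
    simp [card_compl_Ioc hik.le, card_compl_Ico hik.le, hN]
  have hN_le : N ≤ Fintype.card α := hcard _ (mem_insert_self _ _) ▸ card_le_univ _
  simp only [deriv_log_tauFunction hN_le hC, sum_solitonPhase_on_line]
  refine tendsto_gibbsMean_atBot_of_argmin (μ := ∑ j ∈ (Ioc i k)ᶜ, (log (p j) + c * p j))
    (fun S hS => mem_powersetCard_univ.2 (hcard S hS)) (insert_nonempty _ _)
    (fun S hS => hC S (hcard S hS)) ?_ (fun S hS hST => ?_) _ _
  · simp [sum_compl_Ioc_eq_add hik.le, sum_compl_Ico_eq_add hik.le, hc]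
  · simp only [mem_insert, mem_singleton, not_or] at hST
    exact sum_compl_Ioc_lt_sum_of_strictConcaveOn (strictConcaveOn_log_add_mul c) hpmono hp hik hc
      ((mem_powersetCard_univ.1 hS).trans hN.symm) hST.1 hST.2

theorem tendsto_solitonProfile_atTop (hik : i ≤ k) (hpik : p i < p k) (hC : 0 < C (Ico i k)ᶜ)
    (κ : α → ℝ) :
    Tendsto (solitonProfile C p κ i k) atTop (𝓝 (∑ j ∈ (Ico i k)ᶜ, p j)) := by
  rw [← gibbsMean_singleton hC.ne' (fun S => ∑ j ∈ S, κ j) fun S => ∑ j ∈ S, p j]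
  refine tendsto_gibbsMean_atTop_of_argmax (μ := ∑ j ∈ (Ico i k)ᶜ, p j) (by simp)
    (singleton_nonempty _) (by simpa using hC) (by simp) ?_ _ _
  simp [sum_compl_Ioc_lt_sum_compl_Ico hik hpik]

theorem tendsto_solitonProfile_atBot (hik : i ≤ k) (hpik : p i < p k) (hC : 0 < C (Ioc i k)ᶜ)
    (κ : α → ℝ) :
    Tendsto (solitonProfile C p κ i k) atBot (𝓝 (∑ j ∈ (Ioc i k)ᶜ, p j)) := by
  rw [← gibbsMean_singleton hC.ne' (fun S => ∑ j ∈ S, κ j) fun S => ∑ j ∈ S, p j]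
  refine tendsto_gibbsMean_atBot_of_argmin (μ := ∑ j ∈ (Ioc i k)ᶜ, p j) (by simp)
    (singleton_nonempty _) (by simpa using hC) (by simp) ?_ _ _
  simp [sum_compl_Ioc_lt_sum_compl_Ico hik hpik]

end TauFunction

lemma add_mul_eq_of_eq_neg_sub_div {𝕜 : Type*} [Field 𝕜] {a b x y c : 𝕜} (hxy : x ≠ y)
    (hc : c = -(a - b) / (x - y)) : a + c * x = b + c * y := by
  have hsub : x - y ≠ 0 := sub_ne_zero.2 hxy
  rw [hc]
  field_simp
  ring

/-- asymptotics of `w_n(x) = ∂/∂x log τ_n^{(N)}(x)` as `n → −∞`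
along the line `x = c_{i,M−N+i}·n + ξ`: the limit `W_i(ξ)` exists for every
`ξ ∈ ℝ`, and `W_i(ξ) → Σ_{j=1}^{i−1} p_j + Σ_{j=1}^{N−i+1} p_{M−j+1}` as
`ξ → +∞`, `W_i(ξ) → Σ_{j=1}^{i} p_j + Σ_{j=1}^{N−i} p_{M−j+1}` as `ξ → −∞`.
(Indices are 0-based: 1-based `i` corresponds to the 0-based `i` here via
`i ↦ i−1`, so `1 ≤ i ≤ N` becomes `i < N`.) -/
theorem stmt_9 (M N : ℕ) (hM : 1 ≤ M) (hN : 1 ≤ N) (hNM : N ≤ M - 1)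
    (p : Fin M → ℝ) (hp : ∀ j, 0 < p j) (hpmono : StrictMono p)
    (θ0 : Fin M → ℝ) (t : ℝ)
    (i : ℕ) (hi : i < N) :
    let θ : Fin M → ℤ → ℝ → ℝ := fun j n x =>
      (n : ℝ) * Real.log (p j) + p j * x - t / p j + θ0 j
    let τ : ℤ → ℝ → ℝ := fun n x =>
      ∑ ι : Fin N → Fin M,
        if StrictMono ι then
          (∏ a : Fin N, ∏ b : Fin N, if a < b then (p (ι a) - p (ι b)) ^ 2 else 1) *
            Real.exp (∑ j, θ (ι j) n x)
        else 0
    let w : ℤ → ℝ → ℝ := fun n x => deriv (fun y => Real.log (τ n y)) x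
    let c : ℝ := -(Real.log (p ⟨i, by omega⟩) - Real.log (p ⟨M - N + i, by omega⟩)) /
      (p ⟨i, by omega⟩ - p ⟨M - N + i, by omega⟩)
    ∃ W : ℝ → ℝ,
      (∀ ξ : ℝ,
        Filter.Tendsto (fun n : ℤ => w n (c * (n : ℝ) + ξ)) Filter.atBot (nhds (W ξ))) ∧
      Filter.Tendsto W Filter.atTop
        (nhds (∑ j ∈ Finset.univ.filter
          (fun j : Fin M => (j : ℕ) < i ∨ M - N + i ≤ (j : ℕ)), p j)) ∧
      Filter.Tendsto W Filter.atBot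
        (nhds (∑ j ∈ Finset.univ.filter
          (fun j : Fin M => (j : ℕ) < i + 1 ∨ M - N + i + 1 ≤ (j : ℕ)), p j)) := by
  intro θ τ w c
  set a : Fin M := ⟨i, by omega⟩
  set b : Fin M := ⟨M - N + i, by omega⟩
  set κ : Fin M → ℝ := fun j => -(t / p j) + θ0 j
  have hab : a < b := Fin.mk_lt_mk.2 (by omega)
  have hpab : p a < p b := hpmono hab
  have hcard : (Finset.Icc a b)ᶜ.card + 1 = N := by
    rw [Finset.card_compl, Fin.card_Icc, Fintype.card_fin]
    simp only [a, b]
    omega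
  have hτ : ∀ n x, τ n x = tauFunction (sqVandermonde p) p κ N n x := fun n x => by
    rw [← sum_strictMono_eq_tauFunction]
    simp only [τ, θ, κ, solitonPhase, ← sub_eq_add_neg, ← add_assoc, add_sub_assoc]
  have hΔ := sqVandermonde_pos hpmono.injective
  refine ⟨solitonProfile (sqVandermonde p) p κ a b, fun ξ => ?_, ?_, ?_⟩
  · simp only [w, hτ]
    have hc := add_mul_eq_of_eq_neg_sub_div hpab.ne (rfl : c = _)
    exact (tendsto_deriv_log_tauFunction_atBot hp hpmono hab hcard (fun S _ => hΔ S) hc κ ξ).comp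
      (tendsto_intCast_atBot_iff.2 Filter.tendsto_id)
  · have hlim := tendsto_solitonProfile_atTop hab.le hpab (hΔ _) κ
    rwa [← filter_lt_or_le_eq_compl_Ico] at hlim
  · have hlim := tendsto_solitonProfile_atBot hab.le hpab (hΔ _) κ
    rw [← filter_le_or_lt_eq_compl_Ioc] at hlim
    simpa only [Nat.lt_succ_iff, Nat.succ_le_iff, Fin.le_def, Fin.lt_def] using hlim
end

section
/- Let 1 ≤ N ≤ M. Then the N×N Hankel determinant det( f(l, m, n+k+k') )_{0≤k,k'≤N−1} equals Σ_{1≤i_1<⋯<i_N≤M} Δ(i_1,…,i_N)·∏_{j=1}^N α_{i_j}·φ_{i_j}(l,m,n), where Δ(i_1,…,i_N) = ∏_{1≤j<l≤N} (p_{i_j} − p_{i_l})²; in particular, when all α_i > 0 this determinant is strictly positive. -/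
open scoped Classical

/-!
Shifting the exponent `n` of `φ_i` by `k` multiplies it by `p_i ^ k`, so the Hankel matrix factors
as `Vᵀ D V` with `V` the `M × N` Vandermonde matrix of `p` and `D` the diagonal matrix of the
`α_i φ_i(l, m, n)`. The Cauchy–Binet formula expands its determinant over the `N`-element subsets
of the nodes, and each term is the square of a Vandermonde determinant times a product of weights.
For positive weights and distinct nodes every term is positive.
-/

open Equiv Finset Matrix

section CauchyBinet

variable {R ι : Type*} [Fintype ι] {N : ℕ}

theorem sum_injective_eq_sum_strictMono_sum_perm {A : Type*} [AddCommMonoid A] [LinearOrder ι]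
    (F : (Fin N → ι) → A) :
    ∑ t with Function.Injective t, F t = ∑ s with StrictMono s, ∑ σ : Perm (Fin N), F (s ∘ σ) := by
  rw [← sum_product']
  symm
  refine sum_bij (fun x _ ↦ x.1 ∘ x.2) ?maps_to ?injective ?surjective fun _ _ ↦ rfl
  case maps_to =>
    rintro ⟨s, σ⟩ hs
    simp only [mem_product, mem_filter_univ, mem_univ, and_true] at hs ⊢
    exact hs.injective.comp σ.injective
  case injective =>
    rintro ⟨s, σ⟩ hs ⟨t, τ⟩ ht hst
    simp only [mem_product, mem_filter_univ, mem_univ, and_true] at hs ht hst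
    have range_eq : Set.range s = Set.range t := by
      rw [← σ.surjective.range_comp s, ← τ.surjective.range_comp t, hst]
    obtain rfl : s = t := (hs.range_inj ht).1 range_eq
    obtain rfl : σ = τ := Equiv.ext fun k ↦ hs.injective (congrFun hst k)
    rfl
  case surjective =>
    intro t ht
    have sorted : StrictMono (t ∘ Tuple.sort t) :=
      (Tuple.monotone_sort t).strictMono_of_injective
        (((mem_filter_univ t).1 ht).comp (Tuple.sort t).injective)
    refine ⟨(t ∘ Tuple.sort t, (Tuple.sort t)⁻¹), by simpa using sorted, ?_⟩
    ext k
    simp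

variable [CommRing R]

theorem det_mul_eq_sum_prod_mul_det_submatrix {n : Type*} [Fintype n] [DecidableEq n]
    (A : Matrix n ι R) (B : Matrix ι n R) :
    (A * B).det = ∑ t : n → ι, (∏ k, A k (t k)) * (B.submatrix t id).det := by
  have rows_eq : A * B = fun k ↦ ∑ i, A k i • B i := by
    ext k j
    simp [mul_apply]
  calc (A * B).det
      = ∑ t : n → ι, detRowAlternating fun k ↦ A k (t k) • B (t k) := by
        rw [rows_eq]
        exact detRowAlternating.toMultilinearMap.map_sum fun k i ↦ A k i • B i
    _ = ∑ t : n → ι, (∏ k, A k (t k)) * (B.submatrix t id).det :=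
        sum_congr rfl fun t _ ↦ det_mul_column (fun k ↦ A k (t k)) (B.submatrix t id)

theorem det_submatrix_eq_zero_of_not_injective {m n : Type*} [Fintype n] [DecidableEq n]
    (B : Matrix m n R) {t : n → m} (ht : ¬ Function.Injective t) :
    (B.submatrix t id).det = 0 := by
  obtain ⟨a, b, hab, hne⟩ := Function.not_injective_iff.1 ht
  exact det_zero_of_row_eq hne (by ext j; simp [hab])

theorem sum_perm_prod_mul_det_submatrix {m n : Type*} [Fintype n] [DecidableEq n]
    (A : Matrix n m R) (B : Matrix m n R) (s : n → m) :
    ∑ σ : Perm n, (∏ k, A k (s (σ k))) * (B.submatrix (s ∘ σ) id).det =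
      (A.submatrix id s).det * (B.submatrix s id).det := by
  have det_comp (σ : Perm n) :
      (B.submatrix (s ∘ σ) id).det = Perm.sign σ * (B.submatrix s id).det :=
    det_permute σ (B.submatrix s id)
  rw [← det_transpose (A.submatrix id s), det_apply', sum_mul]
  refine sum_congr rfl fun σ _ ↦ ?_
  simp only [det_comp, transpose_apply, submatrix_apply, id]
  ring

theorem det_mul_eq_sum_strictMono_det_submatrix [LinearOrder ι]
    (A : Matrix (Fin N) ι R) (B : Matrix ι (Fin N) R) :
    (A * B).det =
      ∑ s : Fin N → ι with StrictMono s, (A.submatrix id s).det * (B.submatrix s id).det :=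
  calc (A * B).det
      = ∑ t : Fin N → ι, (∏ k, A k (t k)) * (B.submatrix t id).det :=
        det_mul_eq_sum_prod_mul_det_submatrix A B
    _ = ∑ t : Fin N → ι with Function.Injective t,
          (∏ k, A k (t k)) * (B.submatrix t id).det := by
        refine (sum_filter_of_ne fun t _ ↦ ?_).symm
        contrapose!
        intro ht
        rw [det_submatrix_eq_zero_of_not_injective B ht, mul_zero]
    _ = ∑ s : Fin N → ι with StrictMono s,
          ∑ σ : Perm (Fin N), (∏ k, A k (s (σ k))) * (B.submatrix (s ∘ σ) id).det :=
        sum_injective_eq_sum_strictMono_sum_perm _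
    _ = _ := sum_congr rfl fun s _ ↦ sum_perm_prod_mul_det_submatrix A B s

end CauchyBinet

section MomentMatrix

variable {R ι : Type*} [CommRing R] [Fintype ι] {N : ℕ}

/-- The Hankel matrix of the moments `∑ i, w i * v i ^ r` of the discrete measure with weight `w i`
at the node `v i`, with rows and columns indexed from `0` to `N - 1`. -/
def momentMatrix (N : ℕ) (w v : ι → R) : Matrix (Fin N) (Fin N) R :=
  of fun k k' ↦ ∑ i, w i * v i ^ ((k : ℕ) + (k' : ℕ))

theorem momentMatrix_eq_transpose_mul_diagonal_mul [DecidableEq ι] (w v : ι → R) :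
    momentMatrix N w v =
      (rectVandermonde v 1 N)ᵀ * diagonal w * rectVandermonde v 1 N := by
  ext k k'
  rw [mul_apply]
  simp only [momentMatrix, of_apply, mul_diagonal, transpose_apply,
    rectVandermonde_apply, Pi.one_apply, one_pow, mul_one]
  exact sum_congr rfl fun i _ ↦ by ring

theorem det_momentMatrix [LinearOrder ι] (w v : ι → R) :
    (momentMatrix N w v).det =
      ∑ s : Fin N → ι with StrictMono s, (vandermonde (v ∘ s)).det ^ 2 * ∏ j, w (s j) := by
  rw [momentMatrix_eq_transpose_mul_diagonal_mul, det_mul_eq_sum_strictMono_det_submatrix]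
  refine sum_congr rfl fun s _ ↦ ?_
  have right_minor : (rectVandermonde v 1 N).submatrix s id = vandermonde (v ∘ s) := by
    ext j k
    simp [rectVandermonde_apply]
  have left_minor : ((rectVandermonde v 1 N)ᵀ * diagonal w).submatrix id s =
      (vandermonde (v ∘ s))ᵀ * diagonal (w ∘ s) := by
    ext k j
    simp [rectVandermonde_apply]
  rw [left_minor, right_minor, det_mul, det_transpose, det_diagonal]
  simp only [Function.comp_apply]
  ring

theorem det_vandermonde_sq (v : Fin N → R) :
    (vandermonde v).det ^ 2 = ∏ a, ∏ b, if a < b then (v a - v b) ^ 2 else 1 := by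
  simp_rw [det_vandermonde, ← prod_pow, sub_sq_comm (v _) (v _), ← prod_filter,
    filter_lt_eq_Ioi]

theorem det_momentMatrix_pos [LinearOrder R] [IsStrictOrderedRing R] [LinearOrder ι]
    {w v : ι → R} (hw : ∀ i, 0 < w i) (hv : Function.Injective v) (hN : N ≤ Fintype.card ι) :
    0 < (momentMatrix N w v).det := by
  rw [det_momentMatrix]
  refine sum_pos (fun s hs ↦ ?_) ?_
  · have vandermonde_ne_zero : (vandermonde (v ∘ s)).det ≠ 0 :=
      det_vandermonde_ne_zero_iff.2 (hv.comp ((mem_filter_univ s).1 hs).injective)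
    exact mul_pos (sq_pos_of_ne_zero vandermonde_ne_zero) (prod_pos fun j _ ↦ hw (s j))
  · let s : Fin N ↪o ι := univ.orderEmbOfCardLe hN
    exact ⟨s, (mem_filter_univ _).2 s.strictMono⟩

end MomentMatrix

theorem of_sum_mul_rpow_eq_momentMatrix {ι : Type*} [Fintype ι] {N : ℕ} {p : ι → ℝ}
    (hp : ∀ i, 0 < p i) (c : ι → ℝ) (n : ℝ) :
    (of fun k k' : Fin N ↦ ∑ i, c i * p i ^ (n + ((k : ℕ) : ℝ) + ((k' : ℕ) : ℝ))) =
      momentMatrix N (fun i ↦ c i * p i ^ n) p := by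
  ext k k'
  refine sum_congr rfl fun i _ ↦ ?_
  rw [Real.rpow_add_natCast (hp i).ne', Real.rpow_add_natCast (hp i).ne']
  ring

/-- the discrete N×N Hankel determinant equals the sum over
strictly increasing index tuples of the squared van der Monde determinant
times `∏ α_{i_j}·φ_{i_j}(l,m,n)`; in particular when all `α_i > 0` the
determinant is strictly positive. -/
theorem stmt_10 (δ κ : ℝ) (hδ : 0 < δ) (hκ : 0 < κ)
    (M N : ℕ) (hM : 1 ≤ M) (hN : 1 ≤ N) (hNM : N ≤ M)
    (p : Fin M → ℝ) (hp : ∀ i, 0 < p i) (hpmono : StrictMono p)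
    (α : Fin M → ℝ)
    (φ : Fin M → ℤ → ℤ → ℝ → ℝ)
    (hφ : ∀ i l m n, φ i l m n =
      p i ^ n * (1 + δ * p i) ^ l * (1 + κ / p i) ^ (-m))
    (f : ℤ → ℤ → ℝ → ℝ)
    (hf : ∀ l m n, f l m n = ∑ i, α i * φ i l m n)
    (l m : ℤ) (n : ℝ) :
    Matrix.det (Matrix.of fun k k' : Fin N =>
        f l m (n + ((k : ℕ) : ℝ) + ((k' : ℕ) : ℝ))) =
      (∑ ι : Fin N → Fin M,
        if StrictMono ι then
          (∏ a : Fin N, ∏ b : Fin N, if a < b then (p (ι a) - p (ι b)) ^ 2 else 1) *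
            ∏ j, (α (ι j) * φ (ι j) l m n)
        else 0) ∧
    ((∀ i, 0 < α i) →
      0 < Matrix.det (Matrix.of fun k k' : Fin N =>
        f l m (n + ((k : ℕ) : ℝ) + ((k' : ℕ) : ℝ)))) := by
  let c (i : Fin M) : ℝ := α i * ((1 + δ * p i) ^ l * (1 + κ / p i) ^ (-m))
  have weight_eq (i : Fin M) (x : ℝ) : α i * φ i l m x = c i * p i ^ x := by
    rw [hφ]
    ring
  have hankel_eq : (of fun k k' : Fin N ↦ f l m (n + ((k : ℕ) : ℝ) + ((k' : ℕ) : ℝ))) =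
      momentMatrix N (fun i ↦ α i * φ i l m n) p := by
    simp_rw [hf, weight_eq]
    exact of_sum_mul_rpow_eq_momentMatrix hp c n
  have φ_pos (i : Fin M) : 0 < φ i l m n := by
    have := hp i
    rw [hφ]
    positivity
  rw [hankel_eq]
  constructor
  · simp_rw [det_momentMatrix, det_vandermonde_sq, sum_filter, Function.comp_apply]
  · exact fun hα ↦ det_momentMatrix_pos (fun i ↦ mul_pos (hα i) (φ_pos i)) hpmono.injective
      (by simpa using hNM)
end

section
/- Fix integers P_1, P_2, P_3 and A_1, A_2, A_3. Then lim_{ε→0⁺} ε·log( Σ_{i=1}^{3} e^{A_i/ε}·φ_ε(P_i) ) = max(R_1, R_2, R_3), where R_i = A_i + n·P_i + l·max(0, P_i − r) − m·max(0, −P_i − s). -/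
/-!
In the limit `ε → 0⁺`, the transform `f ↦ ε * log f` turns products into sums and powers into
multiples. It turns sums into maxima, because `max f g ≤ f + g ≤ 2 * max f g` and the factor `2`
costs only `ε * log 2 → 0`.
-/

open Filter Finset Topology

theorem max_log_log_le_log_add {x y : ℝ} (hx : 0 < x) (hy : 0 < y) :
    max (Real.log x) (Real.log y) ≤ Real.log (x + y) :=
  max_le (Real.log_le_log hx (by linarith)) (Real.log_le_log hy (by linarith))

theorem log_add_le_log_two_add_max_log_log {x y : ℝ} (hx : 0 < x) (hy : 0 < y) :
    Real.log (x + y) ≤ Real.log 2 + max (Real.log x) (Real.log y) := by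
  have hmax : 0 < max x y := lt_max_of_lt_left hx
  calc Real.log (x + y)
      ≤ Real.log (2 * max x y) :=
        Real.log_le_log (by positivity) (by linarith [le_max_left x y, le_max_right x y])
    _ = Real.log 2 + Real.log (max x y) := Real.log_mul two_ne_zero hmax.ne'
    _ = Real.log 2 + max (Real.log x) (Real.log y) := by
        rw [Real.strictMonoOn_log.monotoneOn.map_max hx hy]

/-- The function `f`, positive near `0⁺`, has ultradiscrete limit `a`: `ε * log (f ε) → a` as
`ε → 0⁺`. Positivity is part of the notion because `Real.log` takes junk values elsewhere. -/
structure HasUltradiscreteLimit (f : ℝ → ℝ) (a : ℝ) : Prop where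
  eventually_pos : ∀ᶠ ε in 𝓝[>] 0, 0 < f ε
  tendsto : Tendsto (fun ε => ε * Real.log (f ε)) (𝓝[>] 0) (𝓝 a)

namespace HasUltradiscreteLimit

variable {f g : ℝ → ℝ} {a b : ℝ}

theorem exp_div (c : ℝ) : HasUltradiscreteLimit (fun ε => Real.exp (c / ε)) c where
  eventually_pos := .of_forall fun _ => Real.exp_pos _
  tendsto := tendsto_const_nhds.congr' <| by
    filter_upwards [self_mem_nhdsWithin] with ε (hε : 0 < ε)
    rw [Real.log_exp, mul_div_cancel₀ c hε.ne']

theorem one : HasUltradiscreteLimit (fun _ => 1) 0 := by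
  simpa using exp_div 0

theorem mul (hf : HasUltradiscreteLimit f a) (hg : HasUltradiscreteLimit g b) :
    HasUltradiscreteLimit (fun ε => f ε * g ε) (a + b) where
  eventually_pos := hf.eventually_pos.and hg.eventually_pos |>.mono fun _ h => mul_pos h.1 h.2
  tendsto := (hf.tendsto.add hg.tendsto).congr' <| by
    filter_upwards [hf.eventually_pos, hg.eventually_pos] with ε hfε hgε
    rw [Real.log_mul hfε.ne' hgε.ne', mul_add]

theorem rpow (hf : HasUltradiscreteLimit f a) (k : ℝ) :
    HasUltradiscreteLimit (fun ε => f ε ^ k) (k * a) where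
  eventually_pos := hf.eventually_pos.mono fun _ h => Real.rpow_pos_of_pos h k
  tendsto := (hf.tendsto.const_mul k).congr' <| by
    filter_upwards [hf.eventually_pos] with ε hfε
    rw [Real.log_rpow hfε, mul_left_comm]

theorem add (hf : HasUltradiscreteLimit f a) (hg : HasUltradiscreteLimit g b) :
    HasUltradiscreteLimit (fun ε => f ε + g ε) (max a b) where
  eventually_pos := hf.eventually_pos.and hg.eventually_pos |>.mono fun _ h => add_pos h.1 h.2
  tendsto := by
    have lower := hf.tendsto.max hg.tendsto
    have error : Tendsto (fun ε : ℝ => ε * Real.log 2) (𝓝[>] 0) (𝓝 0) := by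
      refine tendsto_nhdsWithin_of_tendsto_nhds ?_
      simpa using tendsto_id (x := 𝓝 (0 : ℝ)) |>.mul_const (Real.log 2)
    have upper := error.add lower
    rw [zero_add] at upper
    refine tendsto_of_tendsto_of_tendsto_of_le_of_le' lower upper ?_ ?_
    · filter_upwards [self_mem_nhdsWithin, hf.eventually_pos, hg.eventually_pos]
        with ε (hε : 0 < ε) hfε hgε
      rw [← mul_max_of_nonneg _ _ hε.le]
      gcongr
      exact max_log_log_le_log_add hfε hgε
    · filter_upwards [self_mem_nhdsWithin, hf.eventually_pos, hg.eventually_pos]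
        with ε (hε : 0 < ε) hfε hgε
      rw [← mul_max_of_nonneg _ _ hε.le, ← mul_add]
      gcongr
      exact log_add_le_log_two_add_max_log_log hfε hgε

theorem sum {ι : Type*} {t : Finset ι} (ht : t.Nonempty) {f : ι → ℝ → ℝ} {a : ι → ℝ}
    (hf : ∀ i ∈ t, HasUltradiscreteLimit (f i) (a i)) :
    HasUltradiscreteLimit (fun ε => ∑ i ∈ t, f i ε) (t.sup' ht a) := by
  induction ht using Nonempty.cons_induction with
  | singleton i => simpa using hf i (mem_singleton_self i)
  | cons i t hi ht ih =>
    simp only [sum_cons, sup'_cons ht]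
    exact (hf i (mem_cons_self i t)).add (ih fun j hj => hf j (mem_cons_of_mem hj))

theorem one_add_exp_mul_exp (c d : ℝ) :
    HasUltradiscreteLimit (fun ε => 1 + Real.exp (c / ε) * Real.exp (d / ε)) (max 0 (c + d)) :=
  one.add ((exp_div c).mul (exp_div d))

end HasUltradiscreteLimit

/-- The factor `φ_ε(P) = e^{nP/ε} (1 + δ_ε e^{P/ε})^l (1 + κ_ε e^{-P/ε})^{-m}` for real parameters,
with `δ_ε = e^{-r/ε}` and `κ_ε = e^{-s/ε}`. -/
noncomputable def dispersionFactor (l m n r s P ε : ℝ) : ℝ :=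
  Real.exp (n * P / ε) * (1 + Real.exp (-r / ε) * Real.exp (P / ε)) ^ l *
    (1 + Real.exp (-s / ε) * Real.exp (-P / ε)) ^ (-m)

/-- The piecewise linear function of `P` that `dispersionFactor` becomes in the ultradiscrete
limit. -/
def ultradiscreteDispersion (l m n r s P : ℝ) : ℝ :=
  n * P + l * max 0 (P - r) - m * max 0 (-P - s)

theorem hasUltradiscreteLimit_dispersionFactor (l m n r s P : ℝ) :
    HasUltradiscreteLimit (dispersionFactor l m n r s P)
      (ultradiscreteDispersion l m n r s P) := by
  have limit_eq : ultradiscreteDispersion l m n r s P =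
      n * P + l * max 0 (-r + P) + -m * max 0 (-s + -P) := by
    rw [ultradiscreteDispersion, neg_add_eq_sub r P, neg_add_eq_sub s (-P)]
    ring
  rw [limit_eq]
  exact ((HasUltradiscreteLimit.exp_div (n * P)).mul
    ((HasUltradiscreteLimit.one_add_exp_mul_exp (-r) P).rpow l)).mul
    ((HasUltradiscreteLimit.one_add_exp_mul_exp (-s) (-P)).rpow (-m))

theorem stmt_17_general {ι : Type*} {t : Finset ι} (ht : t.Nonempty) (l m n r s : ℝ)
    (P A : ι → ℝ) :
    Tendsto
      (fun ε => ε * Real.log (∑ i ∈ t, Real.exp (A i / ε) * dispersionFactor l m n r s (P i) ε))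
      (𝓝[>] 0) (𝓝 (t.sup' ht fun i => A i + ultradiscreteDispersion l m n r s (P i))) :=
  (HasUltradiscreteLimit.sum ht fun i _ =>
    (HasUltradiscreteLimit.exp_div (A i)).mul
      (hasUltradiscreteLimit_dispersionFactor l m n r s (P i))).tendsto

/-- ultra-discrete limit of the Y-junction τ-function:
`ε·log(Σ_{i=1}^{3} e^{A_i/ε}·φ_ε(P_i)) → max(R₁, R₂, R₃)` as `ε → 0⁺`, with
`R_i = A_i + n·P_i + l·max(0, P_i − r) − m·max(0, −P_i − s)`. -/
theorem stmt_17 (l m n : ℤ) (r s : ℕ) (P₁ P₂ P₃ A₁ A₂ A₃ : ℤ) :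
    let φ : ℤ → ℝ → ℝ := fun Pp ε =>
      Real.exp ((n : ℝ) * (Pp : ℝ) / ε) *
        (1 + Real.exp (-(r : ℝ) / ε) * Real.exp ((Pp : ℝ) / ε)) ^ l *
        (1 + Real.exp (-(s : ℝ) / ε) * Real.exp (-(Pp : ℝ) / ε)) ^ (-m)
    let R : ℤ → ℤ → ℝ := fun Pp Aa =>
      (Aa : ℝ) + (n : ℝ) * (Pp : ℝ) + (l : ℝ) * max 0 ((Pp : ℝ) - (r : ℝ)) -
        (m : ℝ) * max 0 (-(Pp : ℝ) - (s : ℝ))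
    Filter.Tendsto
      (fun ε : ℝ => ε * Real.log (Real.exp ((A₁ : ℝ) / ε) * φ P₁ ε +
        Real.exp ((A₂ : ℝ) / ε) * φ P₂ ε + Real.exp ((A₃ : ℝ) / ε) * φ P₃ ε))
      (nhdsWithin 0 (Set.Ioi 0)) (nhds (max (R P₁ A₁) (max (R P₂ A₂) (R P₃ A₃)))) := by
  intro φ R
  simpa [φ, R, dispersionFactor, ultradiscreteDispersion, Fin.sum_univ_three, Fin.univ_succ,
      ← Real.rpow_intCast, -zpow_neg, add_assoc, add_sub_assoc] using
    stmt_17_general (univ_nonempty (α := Fin 3)) l m n r s ![P₁, P₂, P₃] ![A₁, A₂, A₃]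
end
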